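/- arXiv:2002.08674 — 2 statements merged into one kernel-verified Lean document; each statement's English description precedes it below -/
import Mathlib

section
/- Let H be a complex Hilbert space and T : H → H a bounded linear operator whose range is closed. Assume that ker(T ∘ T) = ker T, that ker T is spanned by a nonzero vector φ₀, and that the kernel of the Hilbert adjoint T* is spanned by a nonzero vector φ₀*. Then the inner product ⟨φ₀, φ₀*⟩ is nonzero. -/
open scoped InnerProductSpace

/-- If `T` is a bounded operator on a complex Hilbert space with closed range,
`ker (T ∘ T) = ker T`, `ker T = span {φ₀}` and `ker T* = span {φ₀*}` with
`φ₀, φ₀* ≠ 0`, then `⟪φ₀, φ₀*⟫ ≠ 0`. -/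
theorem inner_ne_zero_of_simple_eigenvalue
    {H : Type*} [NormedAddCommGroup H] [InnerProductSpace ℂ H] [CompleteSpace H]
    (T : H →L[ℂ] H) (hrange : IsClosed (Set.range T))
    (φ₀ φs : H) (hφ₀ : φ₀ ≠ 0) (hφs : φs ≠ 0)
    (hker2 : LinearMap.ker (T ∘L T : H →ₗ[ℂ] H) = LinearMap.ker (T : H →ₗ[ℂ] H))
    (hker : LinearMap.ker (T : H →ₗ[ℂ] H) = Submodule.span ℂ {φ₀})
    (hkeradj : LinearMap.ker (ContinuousLinearMap.adjoint T : H →ₗ[ℂ] H) = Submodule.span ℂ {φs}) :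
    ⟪φ₀, φs⟫_ℂ ≠ 0 := by
  intro h0
  have hcl : IsClosed ((LinearMap.range (T : H →ₗ[ℂ] H) : Submodule ℂ H) : Set H) := by
    rw [LinearMap.coe_range]
    exact hrange
  have h1 := (ContinuousLinearMap.adjoint T).orthogonal_ker
  rw [ContinuousLinearMap.adjoint_adjoint, hcl.submodule_topologicalClosure_eq, hkeradj] at h1
  have hmem : φ₀ ∈ LinearMap.range (T : H →ₗ[ℂ] H) := by
    rw [← h1, Submodule.mem_orthogonal_singleton_iff_inner_left]
    exact h0
  obtain ⟨u, hu⟩ := hmem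
  have hu' : T u = φ₀ := hu
  have hφ : T φ₀ = 0 := by
    have : φ₀ ∈ LinearMap.ker (T : H →ₗ[ℂ] H) := by
      rw [hker]
      exact Submodule.mem_span_singleton_self φ₀
    exact this
  have hu2 : u ∈ LinearMap.ker (T ∘L T : H →ₗ[ℂ] H) := by
    change T (T u) = 0
    rw [hu', hφ]
  rw [hker2] at hu2
  have hu3 : T u = 0 := hu2
  exact hφ₀ (hu'.symm.trans hu3)
end

section
/- Let μ, λ₊, λ₋, d ∈ ℂ with μ ≠ 0 and (μ + λ₋)·(μ + λ₊) ≠ 0. Then there exist A, B, C ∈ ℂ satisfying the four matching equations (i) A = B + C, (ii) A·λ₋ = μB − μC, (iii) e^{−λ₊d} = B·e^{μd} + C·e^{−μd}, (iv) −λ₊·e^{−λ₊d} = μB·e^{μd} − μC·e^{−μd}, if and only if e^{2μd} = ((μ − λ₋)·(μ − λ₊)) / ((μ + λ₋)·(μ + λ₊)). -/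
/-- The four C¹-matching equations of the three-layer problem admit a solution
`(A, B, C)` iff the width `d` satisfies
`e^{2μd} = ((μ - λ₋)(μ - λ₊)) / ((μ + λ₋)(μ + λ₊))`. -/
theorem three_layer_matching_iff_width_condition
    (μ lamP lamM d : ℂ) (hμ : μ ≠ 0) (hden : (μ + lamM) * (μ + lamP) ≠ 0) :
    (∃ A B C : ℂ,
        A = B + C ∧
        A * lamM = μ * B - μ * C ∧
        Complex.exp (-lamP * d) = B * Complex.exp (μ * d) + C * Complex.exp (-μ * d) ∧
        -lamP * Complex.exp (-lamP * d)
          = μ * B * Complex.exp (μ * d) - μ * C * Complex.exp (-μ * d))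
      ↔ Complex.exp (2 * μ * d) = ((μ - lamM) * (μ - lamP)) / ((μ + lamM) * (μ + lamP)) := by
  have hE2 : Complex.exp (2 * μ * d) = Complex.exp (μ * d) * Complex.exp (μ * d) := by
    rw [← Complex.exp_add]; congr 1; ring
  have hEF : Complex.exp (μ * d) * Complex.exp (-μ * d) = 1 := by
    rw [← Complex.exp_add, ← Complex.exp_zero]; congr 1; ring
  have hL : Complex.exp (-lamP * d) ≠ 0 := Complex.exp_ne_zero _
  rw [eq_div_iff hden, hE2]
  generalize Complex.exp (μ * d) = E at *
  generalize Complex.exp (-μ * d) = F at *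
  generalize Complex.exp (-lamP * d) = L at *
  constructor
  · rintro ⟨A, B, C, h1, h2, h3, h4⟩
    subst h1
    have b : 2 * μ * B * E = (μ - lamP) * L := by linear_combination -μ * h3 - h4
    have c : 2 * μ * C * F = (μ + lamP) * L := by linear_combination -μ * h3 + h4
    apply mul_right_cancel₀ hL
    linear_combination (-E * E * (μ + lamM)) * c + (μ - lamM) * b
      + 2 * μ * E * h2 + 2 * μ * C * E * (μ + lamM) * hEF
  · intro h
    have h' : E * ((μ + lamM) * (μ + lamP)) = F * ((μ - lamM) * (μ - lamP)) := by
      linear_combination F * h - E * ((μ + lamM) * (μ + lamP)) * hEF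
    refine ⟨(μ - lamP) * L * F / (2 * μ) + (μ + lamP) * L * E / (2 * μ),
      (μ - lamP) * L * F / (2 * μ), (μ + lamP) * L * E / (2 * μ), rfl, ?_, ?_, ?_⟩
    · field_simp
      linear_combination h'
    · field_simp
      linear_combination (-2 * μ) * hEF
    · field_simp
      linear_combination (2 * lamP) * hEF
end
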